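/- Let f : ℝ^N → (−∞,∞] be proper and closed with inf f > −∞. For each k ∈ ℕ let h_k : ℝ^N → ℝ be convex and differentiable, let m_k : ℝ^N → (−∞,∞] be proper, closed and convex with |f(x) − m_k(x)| ≤ ω(‖x − x^k‖) for all x ∈ ℝ^N, where ω is a continuous growth function, and suppose x̂^k is a global minimizer of m_k + D_{h_k}(·, x^k). Suppose: (i) (x^k) and (ŷ^k) are bounded sequences in ℝ^N; (ii) m_k(ŷ^k) + D_{h_k}(ŷ^k, x^k) ≤ m_k(x̂^k) + D_{h_k}(x̂^k, x^k) + ε_k with ε_k → 0; (iii) Δ_k := m_k(ŷ^k) + D_{h_k}(ŷ^k, x^k) − f(x^k) → 0; and (iv) for all bounded sequences (u^k), (v^k) in ℝ^N, u^k − v^k → 0 if and only if D_{h_k}(u^k, v^k) → 0. Then f(x^k) − f(ŷ^k) → 0 and f(x̂^k) − f(x^k) → 0 as k → ∞. -/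

import Mathlib

open scoped RealInnerProductSpace
open Filter Topology

/-- The Bregman distance `D_h(x, u) = h x − h u − ⟨∇h u, x − u⟩` associated with `h`. -/
noncomputable def breg {N : ℕ} (h : EuclideanSpace ℝ (Fin N) → ℝ)
    (x u : EuclideanSpace ℝ (Fin N)) : ℝ :=
  h x - h u - ⟪gradient h u, x - u⟫

/-- Convexity for extended-real-valued functions. -/
def ERealConvex {N : ℕ} (f : EuclideanSpace ℝ (Fin N) → EReal) : Prop :=
  ∀ x y : EuclideanSpace ℝ (Fin N), ∀ a b : ℝ, 0 ≤ a → 0 ≤ b → a + b = 1 →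
    f (a • x + b • y) ≤ (a : EReal) * f x + (b : EReal) * f y

/-!
Convexity of the model `m` gives, for a minimizer `z` of `m + D_h(·, x)` and every point `w`, the
three-point inequality `D_h(w, z) ≤ (m w + D_h(w, x)) - (m z + D_h(z, x))`. Hence bounded
sequences of almost-minimizers are at vanishing Bregman distance from `x̂^k`; among them are
`ŷ^k` and, because `m_k(x^k) = f(x^k)` and `Δ_k → 0`, also `x^k` itself. Condition (iv) is stated
for bounded sequences only and `x̂^k` is not known to be bounded beforehand; but `D_h(w, ·)`
decreases on moving towards `w`, so `x̂^k` may first be pulled into the unit ball around `w^k`.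
Once all three sequences merge, both the model errors and the Bregman distances to `x^k` vanish,
and the objective gaps are sums of such terms.
-/

open Set

section BregmanDistance

variable {E : Type*} [NormedAddCommGroup E] [NormedSpace ℝ E] {h : E → ℝ} {s : Set E}
  {u v w x y z : E}

/-- The Bregman distance `D_h(x, u)` on a normed space, with the Fréchet derivative of `h` at `u`
in place of the pairing with its gradient. -/
noncomputable def bregmanDist (h : E → ℝ) (x u : E) : ℝ :=
  h x - h u - fderiv ℝ h u (x - u)

theorem breg_eq_bregmanDist {N : ℕ} (h : EuclideanSpace ℝ (Fin N) → ℝ) :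
    breg h = bregmanDist h := by
  ext x u
  rw [breg, bregmanDist, inner_gradient_left]

theorem bregmanDist_self (h : E → ℝ) (u : E) : bregmanDist h u u = 0 := by
  simp [bregmanDist]

theorem bregmanDist_eq_add_add (h : E → ℝ) (u z x : E) :
    bregmanDist h u x =
      bregmanDist h u z + bregmanDist h z x + (fderiv ℝ h z - fderiv ℝ h x) (u - z) := by
  simp only [bregmanDist, sub_apply, map_sub]
  ring

theorem bregmanDist_add_bregmanDist_comm (h : E → ℝ) (u v : E) :
    bregmanDist h u v + bregmanDist h v u = (fderiv ℝ h u - fderiv ℝ h v) (u - v) := by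
  simp only [bregmanDist, sub_apply, map_sub]
  ring

theorem bregmanDist_nonneg (hc : ConvexOn ℝ s h) (hd : DifferentiableAt ℝ h u)
    (hy : y ∈ s) (hu : u ∈ s) : 0 ≤ bregmanDist h y u := by
  let ℓ : ℝ →ᵃ[ℝ] E := AffineMap.lineMap u y
  have hderiv : HasDerivAt (h ∘ ℓ) (fderiv ℝ h u (y - u)) 0 := by
    refine HasFDerivAt.comp_hasDerivAt 0 ?_ AffineMap.hasDerivAt_lineMap
    simpa only [ℓ, AffineMap.lineMap_apply_zero] using hd.hasFDerivAt
  have hslope := (hc.comp_affineMap ℓ).le_slope_of_hasDerivAt (x := 0) (y := 1)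
    (by simpa [ℓ] using hu) (by simpa [ℓ] using hy) one_pos hderiv
  rw [slope_def_field] at hslope
  simp only [ℓ, Function.comp_apply, AffineMap.lineMap_apply_zero, AffineMap.lineMap_apply_one,
    sub_zero, div_one] at hslope
  exact sub_nonneg.2 hslope

theorem bregmanDist_le_of_mem_segment (hc : ConvexOn ℝ s h) (hv : DifferentiableAt ℝ h v)
    (hw : DifferentiableAt ℝ h w) (hus : u ∈ s) (hvs : v ∈ s) (hwseg : w ∈ segment ℝ v u) :
    bregmanDist h u w ≤ bregmanDist h u v := by
  have hws : w ∈ s := hc.1.segment_subset hvs hus hwseg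
  rw [segment_eq_image'] at hwseg
  obtain ⟨θ, ⟨hθ₀, hθ₁⟩, rfl⟩ := hwseg
  set w := v + θ • (u - v)
  rcases hθ₀.eq_or_lt with rfl | hθ
  · simp
  have hmono : 0 ≤ θ * (fderiv ℝ h w - fderiv ℝ h v) (u - v) := by
    have hsum := bregmanDist_add_bregmanDist_comm h w v
    rw [show w - v = θ • (u - v) by simp [w], map_smul, smul_eq_mul] at hsum
    exact hsum ▸ add_nonneg (bregmanDist_nonneg hc hv hws hvs) (bregmanDist_nonneg hc hw hvs hws)
  have huw : u - w = (1 - θ) • (u - v) := by simp only [w]; module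
  have hthree := bregmanDist_eq_add_add h u w v
  rw [huw, map_smul, smul_eq_mul] at hthree
  linarith [bregmanDist_nonneg hc hv hws hvs,
    mul_nonneg (sub_nonneg.2 hθ₁) (nonneg_of_mul_nonneg_right hmono hθ)]

theorem hasFDerivAt_bregmanDist (hd : DifferentiableAt ℝ h z) (x : E) :
    HasFDerivAt (bregmanDist h · x) (fderiv ℝ h z - fderiv ℝ h x) z :=
  (hd.hasFDerivAt.sub_const (h x)).sub
    ((fderiv ℝ h x).hasFDerivAt.comp z ((hasFDerivAt_id z).sub_const x))

/- On the epigraph of `m`, a convex set, the real-valued function `(v, r) ↦ r + D_h(v, x)` is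
minimal at `(z, m z)`, so its derivative there is nonnegative in the direction of `(u, m u)`. -/
theorem add_bregmanDist_add_bregmanDist_le {m : E → EReal} {a b : ℝ}
    (hm : Convex ℝ {p : E × ℝ | m p.1 ≤ p.2}) (hd : DifferentiableAt ℝ h z)
    (hmin : ∀ v, m z + (bregmanDist h z x : EReal) ≤ m v + (bregmanDist h v x : EReal))
    (hz : m z = a) (hu : m u = b) :
    a + bregmanDist h z x + bregmanDist h u z ≤ b + bregmanDist h u x := by
  have hmin_epi : IsMinOn (fun p : E × ℝ => p.2 + bregmanDist h p.1 x)
      {p : E × ℝ | m p.1 ≤ p.2} (z, a) := by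
    rintro ⟨v, r⟩ hvr
    have hle := (hmin v).trans (add_le_add_left hvr _)
    rw [hz] at hle
    exact_mod_cast hle
  have hderiv : HasFDerivAt (fun p : E × ℝ => p.2 + bregmanDist h p.1 x)
      (.snd ℝ E ℝ + (fderiv ℝ h z - fderiv ℝ h x).comp (.fst ℝ E ℝ)) (z, a) :=
    hasFDerivAt_snd.add (HasFDerivAt.comp (g := (bregmanDist h · x)) (z, a)
      (hasFDerivAt_bregmanDist hd x) hasFDerivAt_fst)
  have hcone : (u, b) - (z, a) ∈ posTangentConeAt {p : E × ℝ | m p.1 ≤ p.2} (z, a) :=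
    sub_mem_posTangentConeAt_of_segment_subset (hm.segment_subset hz.le hu.le)
  have hfirst : 0 ≤ b - a + (fderiv ℝ h z - fderiv ℝ h x) (u - z) :=
    hmin_epi.localize.hasFDerivWithinAt_nonneg hderiv.hasFDerivWithinAt hcone
  linarith [bregmanDist_eq_add_add h u z x]

end BregmanDistance

theorem ERealConvex.convex_epigraph {N : ℕ} {f : EuclideanSpace ℝ (Fin N) → EReal}
    (hf : ERealConvex f) : Convex ℝ {p : EuclideanSpace ℝ (Fin N) × ℝ | f p.1 ≤ p.2} := by
  rintro ⟨x, r⟩ hx ⟨y, q⟩ hy a b ha hb hab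
  calc f (a • x + b • y) ≤ a * f x + b * f y := hf x y a b ha hb hab
    _ ≤ a * r + b * q := add_le_add
      (mul_le_mul_of_nonneg_left hx (EReal.coe_nonneg.2 ha))
      (mul_le_mul_of_nonneg_left hy (EReal.coe_nonneg.2 hb))
    _ = ((a * r + b * q : ℝ) : EReal) := by norm_cast

theorem isBounded_range_iff_exists_norm_le {ι E : Type*} [SeminormedAddCommGroup E] {u : ι → E} :
    Bornology.IsBounded (range u) ↔ ∃ C, ∀ i, ‖u i‖ ≤ C := by
  simp only [isBounded_iff_forall_norm_le, forall_mem_range]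

theorem isBounded_range_add {ι E : Type*} [SeminormedAddCommGroup E] {u v : ι → E}
    (hu : Bornology.IsBounded (range u)) (hv : Bornology.IsBounded (range v)) :
    Bornology.IsBounded (range fun i => u i + v i) :=
  (hu.add hv).subset (range_subset_iff.2 fun i => add_mem_add ⟨i, rfl⟩ ⟨i, rfl⟩)

section SequentialConsistency

variable {E : Type*} [NormedAddCommGroup E] [NormedSpace ℝ E]

/-- Condition (iv): along bounded sequences, vanishing of the differences is the same as vanishing
of the Bregman distances `D_{h_k}`. -/
def SequentiallyConsistent (h : ℕ → E → ℝ) : Prop :=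
  ∀ u v : ℕ → E, Bornology.IsBounded (range u) → Bornology.IsBounded (range v) →
    (Tendsto (fun k => u k - v k) atTop (𝓝 0) ↔
      Tendsto (fun k => bregmanDist (h k) (u k) (v k)) atTop (𝓝 0))

theorem add_univUnitBall_mem_segment (u v : E) :
    u + OpenPartialHomeomorph.univUnitBall (v - u) ∈ segment ℝ u v := by
  rw [segment_eq_image', OpenPartialHomeomorph.univUnitBall_apply]
  refine ⟨(√(1 + ‖v - u‖ ^ 2))⁻¹, ⟨by positivity, inv_le_one_of_one_le₀ ?_⟩, rfl⟩
  exact Real.one_le_sqrt.2 (le_add_of_nonneg_right (sq_nonneg _))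

theorem tendsto_zero_of_tendsto_univUnitBall {ι : Type*} {l : Filter ι} {d : ι → E}
    (hd : Tendsto (fun i => OpenPartialHomeomorph.univUnitBall (d i)) l (𝓝 0)) :
    Tendsto d l (𝓝 0) := by
  have hsymm := OpenPartialHomeomorph.univUnitBall.tendsto_symm (mem_univ (0 : E))
  rw [OpenPartialHomeomorph.univUnitBall_apply_zero] at hsymm
  exact (hsymm.comp hd).congr fun i =>
    OpenPartialHomeomorph.univUnitBall.left_inv (mem_univ (d i))

namespace SequentiallyConsistent

variable {h : ℕ → E → ℝ} {m : ℕ → E → EReal} {u v w x y z : ℕ → E}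

theorem tendsto_sub_of_tendsto_bregmanDist (hcons : SequentiallyConsistent h)
    (hconv : ∀ k, ConvexOn ℝ univ (h k)) (hdiff : ∀ k, Differentiable ℝ (h k))
    (hu : Bornology.IsBounded (range u))
    (hD : Tendsto (fun k => bregmanDist (h k) (u k) (v k)) atTop (𝓝 0)) :
    Tendsto (fun k => u k - v k) atTop (𝓝 0) := by
  let t : ℕ → E := fun k => OpenPartialHomeomorph.univUnitBall (v k - u k)
  have ht : Bornology.IsBounded (range t) := Metric.isBounded_ball.subset <|
    range_subset_iff.2 fun k => OpenPartialHomeomorph.univUnitBall.map_source (mem_univ _)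
  have hDt : Tendsto (fun k => bregmanDist (h k) (u k) (u k + t k)) atTop (𝓝 0) :=
    squeeze_zero
      (fun k => bregmanDist_nonneg (hconv k) (hdiff k _) (mem_univ _) (mem_univ _))
      (fun k => bregmanDist_le_of_mem_segment (hconv k) (hdiff k _) (hdiff k _) (mem_univ _)
        (mem_univ _) (segment_symm ℝ (u k) (v k) ▸ add_univUnitBall_mem_segment (u k) (v k))) hD
  have ht₀ : Tendsto t atTop (𝓝 0) := by
    simpa using ((hcons u _ hu (isBounded_range_add hu ht)).2 hDt).neg
  simpa using (tendsto_zero_of_tendsto_univUnitBall ht₀).neg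

theorem tendsto_sub_of_almost_minimizers (hcons : SequentiallyConsistent h)
    (hconv : ∀ k, ConvexOn ℝ univ (h k)) (hdiff : ∀ k, Differentiable ℝ (h k))
    (hm : ∀ k, Convex ℝ {p : E × ℝ | m k p.1 ≤ p.2})
    (hmin : ∀ k v, m k (z k) + (bregmanDist (h k) (z k) (x k) : EReal) ≤
      m k v + (bregmanDist (h k) v (x k) : EReal))
    {a b : ℕ → ℝ} (hz : ∀ k, m k (z k) = a k) (hw : ∀ k, m k (w k) = b k)
    (hwbdd : Bornology.IsBounded (range w))
    (hgap : Tendsto (fun k => b k + bregmanDist (h k) (w k) (x k) -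
      (a k + bregmanDist (h k) (z k) (x k))) atTop (𝓝 0)) :
    Tendsto (fun k => w k - z k) atTop (𝓝 0) := by
  refine hcons.tendsto_sub_of_tendsto_bregmanDist hconv hdiff hwbdd (squeeze_zero
    (fun k => bregmanDist_nonneg (hconv k) (hdiff k _) (mem_univ _) (mem_univ _))
    (fun k => ?_) hgap)
  linarith [add_bregmanDist_add_bregmanDist_le (hm k) (hdiff k _) (hmin k) (hz k) (hw k)]

theorem tendsto_bregmanDist_of_tendsto_sub (hcons : SequentiallyConsistent h)
    (hv : Bornology.IsBounded (range v)) (huv : Tendsto (fun k => u k - v k) atTop (𝓝 0)) :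
    Tendsto (fun k => bregmanDist (h k) (u k) (v k)) atTop (𝓝 0) := by
  have hu : Bornology.IsBounded (range u) := by
    simpa using isBounded_range_add (Metric.isBounded_range_of_tendsto _ huv) hv
  exact (hcons u v hu hv).1 huv

theorem tendsto_sub_of_inexact_prox (hcons : SequentiallyConsistent h)
    (hconv : ∀ k, ConvexOn ℝ univ (h k)) (hdiff : ∀ k, Differentiable ℝ (h k))
    (hm : ∀ k, Convex ℝ {p : E × ℝ | m k p.1 ≤ p.2})
    (hmin : ∀ k v, m k (z k) + (bregmanDist (h k) (z k) (x k) : EReal) ≤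
      m k v + (bregmanDist (h k) v (x k) : EReal))
    {a b c : ℕ → ℝ} (hz : ∀ k, m k (z k) = a k) (hy : ∀ k, m k (y k) = b k)
    (hx : ∀ k, m k (x k) = c k)
    (hxbdd : Bornology.IsBounded (range x)) (hybdd : Bornology.IsBounded (range y))
    (hgap : Tendsto (fun k => b k + bregmanDist (h k) (y k) (x k) -
      (a k + bregmanDist (h k) (z k) (x k))) atTop (𝓝 0))
    (himprove : Tendsto (fun k => b k + bregmanDist (h k) (y k) (x k) - c k) atTop (𝓝 0)) :
    Tendsto (fun k => y k - x k) atTop (𝓝 0) ∧ Tendsto (fun k => z k - x k) atTop (𝓝 0) := by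
  have hyz := hcons.tendsto_sub_of_almost_minimizers hconv hdiff hm hmin hz hy hybdd hgap
  have hxz : Tendsto (fun k => x k - z k) atTop (𝓝 0) := by
    refine hcons.tendsto_sub_of_almost_minimizers hconv hdiff hm hmin hz hx hxbdd ?_
    simpa [bregmanDist_self] using hgap.sub himprove
  exact ⟨by simpa using hyz.sub hxz, by simpa using hxz.neg⟩

end SequentiallyConsistent

end SequentialConsistency

section ExtendedReals

variable {p q : EReal} {a b c d : ℝ}

theorem exists_coe_of_coe_eq_add_sub (h : (c : EReal) = p + d - q) :
    ∃ a b : ℝ, p = a ∧ q = b ∧ c = a + d - b := by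
  induction p with
  | bot => simp at h
  | top => induction q <;> simp at h
  | coe a =>
    induction q with
    | bot => simp [← EReal.coe_add] at h
    | top => simp at h
    | coe b => exact ⟨a, b, rfl, rfl, mod_cast h⟩

theorem exists_coe_of_coe_le_add_add (hl : a + b ≤ p + c + (d : EReal))
    (hu : p + c ≤ a + (b : EReal)) : ∃ r : ℝ, p = r := by
  induction p with
  | bot => simp [← EReal.coe_add] at hl
  | top => simp [← EReal.coe_add] at hu
  | coe r => exact ⟨r, rfl⟩

theorem exists_coe_abs_sub_le (hl : a - q ≤ (c : EReal)) (hu : q - a ≤ (c : EReal)) :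
    ∃ b : ℝ, q = b ∧ |b - a| ≤ c := by
  induction q with
  | bot => simp at hl
  | top => simp at hu
  | coe b => exact ⟨b, rfl, abs_sub_le_iff.2 ⟨mod_cast hu, mod_cast hl⟩⟩

end ExtendedReals

theorem tendsto_comp_norm_zero {ι E : Type*} [SeminormedAddCommGroup E] {ω : ℝ → ℝ}
    (hω0 : ω 0 = 0) (hωcont : ContinuousWithinAt ω (Ici 0) 0) {l : Filter ι} {d : ι → E}
    (hd : Tendsto d l (𝓝 0)) : Tendsto (fun i => ω ‖d i‖) l (𝓝 0) := by
  rw [ContinuousWithinAt, hω0] at hωcont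
  exact hωcont.comp (tendsto_nhdsWithin_iff.2
    ⟨tendsto_zero_iff_norm_tendsto_zero.1 hd, .of_forall fun i => norm_nonneg (d i)⟩)

theorem objective_gaps_vanish_general {E : Type*} [NormedAddCommGroup E] [NormedSpace ℝ E]
    (f : E → EReal) (x yh xh : ℕ → E)
    (h : ℕ → E → ℝ) (hhconv : ∀ k, ConvexOn ℝ univ (h k)) (hhdiff : ∀ k, Differentiable ℝ (h k))
    (m : ℕ → E → EReal) (hmconv : ∀ k, Convex ℝ {p : E × ℝ | m k p.1 ≤ p.2})
    (ω : ℝ → ℝ) (hω0 : ω 0 = 0) (hωcont : ContinuousWithinAt ω (Ici 0) 0)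
    (hmodel : ∀ k z, f z - m k z ≤ (ω ‖z - x k‖ : EReal) ∧ m k z - f z ≤ (ω ‖z - x k‖ : EReal))
    (hmin : ∀ k u, m k (xh k) + (bregmanDist (h k) (xh k) (x k) : EReal) ≤
      m k u + (bregmanDist (h k) u (x k) : EReal))
    (hxbdd : Bornology.IsBounded (range x)) (hybdd : Bornology.IsBounded (range yh))
    (ε : ℕ → ℝ) (hε : Tendsto ε atTop (𝓝 0))
    (hinexact : ∀ k, m k (yh k) + (bregmanDist (h k) (yh k) (x k) : EReal) ≤
      m k (xh k) + (bregmanDist (h k) (xh k) (x k) : EReal) + (ε k : EReal))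
    (Δ : ℕ → ℝ)
    (hΔdef : ∀ k, (Δ k : EReal) =
      m k (yh k) + (bregmanDist (h k) (yh k) (x k) : EReal) - f (x k))
    (hΔ : Tendsto Δ atTop (𝓝 0)) (hcons : SequentiallyConsistent h) :
    Tendsto (fun k => f (x k) - f (yh k)) atTop (𝓝 0) ∧
      Tendsto (fun k => f (xh k) - f (x k)) atTop (𝓝 0) := by
  choose my fx hmy hfx hΔ_eq using fun k => exists_coe_of_coe_eq_add_sub (hΔdef k)
  have hmx (k) : m k (x k) = fx k := by
    have hle := hmodel k (x k)
    rw [sub_self, norm_zero, hω0, EReal.coe_zero, EReal.sub_nonpos, EReal.sub_nonpos] at hle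
    rw [← hfx, hle.1.antisymm hle.2]
  simp only [hmy] at hinexact
  choose mz hmz using fun k => exists_coe_of_coe_le_add_add (hinexact k) (hmy k ▸ hmin k (yh k))
  choose fy hfy hfy_err using fun k =>
    exists_coe_abs_sub_le (hmy k ▸ (hmodel k (yh k)).2) (hmy k ▸ (hmodel k (yh k)).1)
  choose fz hfz hfz_err using fun k =>
    exists_coe_abs_sub_le (hmz k ▸ (hmodel k (xh k)).2) (hmz k ▸ (hmodel k (xh k)).1)
  let Dy k := bregmanDist (h k) (yh k) (x k)
  let Dz k := bregmanDist (h k) (xh k) (x k)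
  have hgap : Tendsto (fun k => my k + Dy k - (mz k + Dz k)) atTop (𝓝 0) := by
    refine squeeze_zero (fun k => sub_nonneg.2 ?_) (fun k => sub_le_iff_le_add'.2 ?_) hε
    · exact_mod_cast hmz k ▸ hmy k ▸ hmin k (yh k)
    · exact_mod_cast hmz k ▸ hinexact k
  obtain ⟨hyx, hzx⟩ := hcons.tendsto_sub_of_inexact_prox hhconv hhdiff hmconv hmin hmz hmy hmx
    hxbdd hybdd hgap (hΔ.congr hΔ_eq)
  have hDy : Tendsto Dy atTop (𝓝 0) := hcons.tendsto_bregmanDist_of_tendsto_sub hxbdd hyx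
  have hDz : Tendsto Dz atTop (𝓝 0) := hcons.tendsto_bregmanDist_of_tendsto_sub hxbdd hzx
  have herr_y : Tendsto (fun k => fy k - my k) atTop (𝓝 0) :=
    squeeze_zero_norm hfy_err (tendsto_comp_norm_zero hω0 hωcont hyx)
  have herr_z : Tendsto (fun k => fz k - mz k) atTop (𝓝 0) :=
    squeeze_zero_norm hfz_err (tendsto_comp_norm_zero hω0 hωcont hzx)
  have hgap_xy : Tendsto (fun k => fx k - fy k) atTop (𝓝 0) := by
    have hsum := (hDy.sub hΔ).sub herr_y
    simp only [sub_zero, hΔ_eq] at hsum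
    exact hsum.congr fun k => by ring
  have hgap_zx : Tendsto (fun k => fz k - fx k) atTop (𝓝 0) := by
    have hsum := ((herr_z.sub hgap).add hΔ).sub hDz
    simp only [sub_zero, add_zero, hΔ_eq] at hsum
    exact hsum.congr fun k => by ring
  simp only [hfx, hfy, hfz]
  exact ⟨EReal.tendsto_coe.2 hgap_xy, EReal.tendsto_coe.2 hgap_zx⟩

/-- **Vanishing objective value gaps along the iterates.** -/
theorem objective_gaps_vanish (N : ℕ)
    (f : EuclideanSpace ℝ (Fin N) → EReal)
    (hfbot : ∀ z, f z ≠ ⊥) (hfproper : ∃ z, f z ≠ ⊤)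
    (hfclosed : LowerSemicontinuous f) (hfinf : ⊥ < ⨅ z, f z)
    (x yh xh : ℕ → EuclideanSpace ℝ (Fin N))
    (h : ℕ → EuclideanSpace ℝ (Fin N) → ℝ)
    (hhconv : ∀ k, ConvexOn ℝ Set.univ (h k)) (hhdiff : ∀ k, Differentiable ℝ (h k))
    (m : ℕ → EuclideanSpace ℝ (Fin N) → EReal)
    (hmbot : ∀ k z, m k z ≠ ⊥) (hmproper : ∀ k, ∃ z, m k z ≠ ⊤)
    (hmclosed : ∀ k, LowerSemicontinuous (m k)) (hmconv : ∀ k, ERealConvex (m k))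
    (ω : ℝ → ℝ) (hω0 : ω 0 = 0) (hωnn : ∀ t, 0 ≤ t → 0 ≤ ω t)
    (hωcont : ContinuousOn ω (Set.Ici 0))
    (hωgrowth : Tendsto (fun t => ω t / t) (𝓝[>] (0:ℝ)) (𝓝 0))
    (hmodel : ∀ k z, f z - m k z ≤ ((ω ‖z - x k‖ : ℝ) : EReal) ∧
                     m k z - f z ≤ ((ω ‖z - x k‖ : ℝ) : EReal))
    (hmin : ∀ k u, m k (xh k) + ((breg (h k) (xh k) (x k) : ℝ) : EReal) ≤
                   m k u + ((breg (h k) u (x k) : ℝ) : EReal))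
    -- (i) boundedness
    (hxbdd : ∃ C, ∀ k, ‖x k‖ ≤ C) (hybdd : ∃ C, ∀ k, ‖yh k‖ ≤ C)
    -- (ii) inexactness vanishes
    (ε : ℕ → ℝ) (hε : Tendsto ε atTop (𝓝 0))
    (hinexact : ∀ k, m k (yh k) + ((breg (h k) (yh k) (x k) : ℝ) : EReal) ≤
      m k (xh k) + ((breg (h k) (xh k) (x k) : ℝ) : EReal) + ((ε k : ℝ) : EReal))
    -- (iii) model improvement vanishes
    (Δ : ℕ → ℝ)
    (hΔdef : ∀ k, ((Δ k : ℝ) : EReal) =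
      m k (yh k) + ((breg (h k) (yh k) (x k) : ℝ) : EReal) - f (x k))
    (hΔ : Tendsto Δ atTop (𝓝 0))
    -- (iv) Bregman continuity
    (hbregcont : ∀ u v : ℕ → EuclideanSpace ℝ (Fin N),
      (∃ C, ∀ k, ‖u k‖ ≤ C) → (∃ C, ∀ k, ‖v k‖ ≤ C) →
      (Tendsto (fun k => u k - v k) atTop (𝓝 0) ↔
        Tendsto (fun k => breg (h k) (u k) (v k)) atTop (𝓝 0))) :
    Tendsto (fun k => f (x k) - f (yh k)) atTop (𝓝 (0 : EReal)) ∧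
    Tendsto (fun k => f (xh k) - f (x k)) atTop (𝓝 (0 : EReal)) := by
  simp only [breg_eq_bregmanDist, ← isBounded_range_iff_exists_norm_le]
    at hmin hinexact hΔdef hxbdd hybdd hbregcont
  exact objective_gaps_vanish_general f x yh xh h hhconv hhdiff m
    (fun k => (hmconv k).convex_epigraph) ω hω0 (hωcont 0 self_mem_Ici) hmodel hmin hxbdd hybdd
    ε hε hinexact Δ hΔdef hΔ hbregcont
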